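/- For every real s > 1 and every real r > 1, the function f(p) = (r-1)/(ζ(s)Γ(s)(1-p)^r) · ∫_p^1 (ω-p)^(r-2) (-ln ω)^(s-1) / ω^(r-1) dω is nonnegative on (0,1) and satisfies ∫₀¹ f(p) dp = 1; i.e., it is a genuine probability density function on (0,1). -/

import Mathlib

/-!
For `0 < w < 1` the geometric distribution with masses `(1 - w) w ^ x` is a mixture, over `p`, of
the negative binomial distributions of shape `r`, with mixing density
`(r - 1) (1 - w) w ^ (1 - r) (w - p) ^ (r - 2) (1 - p) ^ (-r)` on `0 < p < w`. The Zeta(`s`)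
distribution is in turn the mixture of these geometric distributions over `w`, with density
`(-log w) ^ (s - 1) / (ζ(s) Γ(s) (1 - w))`. Hence `f` is a mixture of probability densities with
weights of total mass one, and Fubini's theorem gives it total mass one. The total mass of the
weights is found by expanding `1 / (1 - w)` in a geometric series and integrating each term by
Euler's formula for `Γ(s)`, in the variable `t = -log w`.
-/

open MeasureTheory

/-- The Riemann zeta function for real `s > 1`, defined as `∑_{x=0}^∞ (x+1)^(-s)`. -/
noncomputable def zetaS (s : ℝ) : ℝ := ∑' x : ℕ, ((x : ℝ) + 1) ^ (-s)

open Set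

section Mixture

variable {α β E : Type*} [MeasurableSpace α] [MeasurableSpace β] [NormedAddCommGroup E]
  [NormedSpace ℝ E] {μ : Measure α} {ν : Measure β} [SFinite μ] [SFinite ν]
  {k : α → β → ℝ} {g : β → E}

lemma integrable_uncurry_smul_of_integral_eq_one
    (hk : AEStronglyMeasurable (Function.uncurry k) (μ.prod ν))
    (hk_nonneg : ∀ᵐ y ∂ν, ∀ᵐ x ∂μ, 0 ≤ k x y) (hk_one : ∀ᵐ y ∂ν, ∫ x, k x y ∂μ = 1)
    (hg : Integrable g ν) :
    Integrable (Function.uncurry fun x y ↦ k x y • g y) (μ.prod ν) := by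
  refine (integrable_prod_iff' (hk.smul hg.1.comp_snd)).2 ⟨?_, hg.norm.congr ?_⟩
  · filter_upwards [hk_one] with y hy
    exact (integrable_of_integral_eq_one hy).smul_const (g y)
  · filter_upwards [hk_nonneg, hk_one] with y hy_nonneg hy
    have norm_eq : (fun x ↦ ‖k x y • g y‖) =ᵐ[μ] fun x ↦ k x y * ‖g y‖ := by
      filter_upwards [hy_nonneg] with x hx
      rw [norm_smul, Real.norm_of_nonneg hx]
    exact ((integral_congr_ae norm_eq).trans (by rw [integral_mul_const, hy, one_mul])).symm

theorem integral_integral_smul_of_integral_eq_one [CompleteSpace E]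
    (hk : AEStronglyMeasurable (Function.uncurry k) (μ.prod ν))
    (hk_nonneg : ∀ᵐ y ∂ν, ∀ᵐ x ∂μ, 0 ≤ k x y) (hk_one : ∀ᵐ y ∂ν, ∫ x, k x y ∂μ = 1)
    (hg : Integrable g ν) :
    ∫ x, ∫ y, k x y • g y ∂ν ∂μ = ∫ y, g y ∂ν := by
  rw [integral_integral_swap (integrable_uncurry_smul_of_integral_eq_one hk hk_nonneg hk_one hg)]
  refine integral_congr_ae ?_
  filter_upwards [hk_one] with y hy
  rw [integral_smul_const, hy, one_smul]

end Mixture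

section GeometricMixing

lemma hasDerivAt_sub_div_sub_rpow {r w b p : ℝ} (hpw : p < w) (hpb : p < b) :
    HasDerivAt (fun p ↦ ((w - p) / (b - p)) ^ (r - 1))
      (-((r - 1) * (b - w) * ((w - p) ^ (r - 2) / (b - p) ^ r))) p := by
  have hw : 0 < w - p := sub_pos.2 hpw
  have hb : 0 < b - p := sub_pos.2 hpb
  have quotient : HasDerivAt (fun p ↦ (w - p) / (b - p))
      (((-1) * (b - p) - (w - p) * (-1)) / (b - p) ^ 2) p :=
    ((hasDerivAt_id p).const_sub w).div ((hasDerivAt_id p).const_sub b) hb.ne'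
  refine (quotient.rpow_const (p := r - 1) (Or.inl (div_pos hw hb).ne')).congr_deriv ?_
  have split_rpow : (b - p) ^ r = (b - p) ^ (r - 2) * (b - p) ^ 2 := by
    rw [← Real.rpow_natCast, ← Real.rpow_add hb]
    norm_num
  rw [show r - 1 - 1 = r - 2 by ring, Real.div_rpow hw.le hb.le, split_rpow]
  field_simp
  ring

lemma integral_sub_rpow_div_sub_rpow {r a w b : ℝ} (hr : 1 < r) (haw : a ≤ w) (hwb : w < b) :
    ∫ p in a..w, (r - 1) * (b - w) * ((w - p) ^ (r - 2) / (b - p) ^ r) =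
      ((w - a) / (b - a)) ^ (r - 1) := by
  have cont : ContinuousOn (fun p ↦ -((w - p) / (b - p)) ^ (r - 1)) (Icc a w) := by
    refine (ContinuousOn.rpow_const (.div (by fun_prop) (by fun_prop) ?_) ?_).neg
    · exact fun p hp ↦ (sub_pos.2 (hp.2.trans_lt hwb)).ne'
    · exact fun p _ ↦ Or.inr (sub_pos.2 hr).le
  have deriv_eq (p) (hp : p ∈ Ioo a w) : HasDerivAt (fun p ↦ -((w - p) / (b - p)) ^ (r - 1))
      ((r - 1) * (b - w) * ((w - p) ^ (r - 2) / (b - p) ^ r)) p := by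
    simpa only [neg_neg] using (hasDerivAt_sub_div_sub_rpow hp.2 (hp.2.trans hwb)).fun_neg
  have deriv_nonneg (p) (hp : p ∈ Ioo a w) :
      0 ≤ (r - 1) * (b - w) * ((w - p) ^ (r - 2) / (b - p) ^ r) := by
    have hw : 0 < w - p := sub_pos.2 hp.2
    have hb : 0 < b - p := sub_pos.2 (hp.2.trans hwb)
    have := sub_pos.2 hr
    have := sub_pos.2 hwb
    positivity
  have int := intervalIntegral.integrableOn_deriv_of_nonneg cont deriv_eq deriv_nonneg
  rw [intervalIntegral.integral_eq_sub_of_hasDerivAt_of_le haw cont deriv_eq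
    ((intervalIntegrable_iff_integrableOn_Ioc_of_le haw).2 int)]
  simp [Real.zero_rpow (sub_pos.2 hr).ne']

/-- The density, as a function of `p`, with respect to which the negative binomial distributions of
fixed shape `r` (with masses `Γ(x + r) / (Γ(r) * x!) * p ^ x * (1 - p) ^ r`) mix to the
geometric distribution with masses `(1 - w) * w ^ x`. It is extended by `0` outside `0 < p < w`. -/
noncomputable def geometricMixingDensity (r w p : ℝ) : ℝ :=
  (Ioo 0 w).indicator
    (fun p ↦ (r - 1) * (1 - w) * ((w - p) ^ (r - 2) / (1 - p) ^ r) / w ^ (r - 1)) p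

lemma geometricMixingDensity_nonneg {r w : ℝ} (hr : 1 ≤ r) (hw : w ≤ 1) (p : ℝ) :
    0 ≤ geometricMixingDensity r w p := by
  refine indicator_nonneg (fun p hp ↦ ?_) p
  have hw₀ : 0 < w := hp.1.trans hp.2
  have hwp : 0 < w - p := sub_pos.2 hp.2
  have hp₁ : 0 < 1 - p := sub_pos.2 (hp.2.trans_le hw)
  have := sub_nonneg.2 hr
  have := sub_nonneg.2 hw
  positivity

lemma integral_geometricMixingDensity {r w : ℝ} (hr : 1 < r) (hw : w ∈ Ioo 0 1) :
    ∫ p in Ioo 0 1, geometricMixingDensity r w p = 1 := by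
  simp only [geometricMixingDensity]
  rw [setIntegral_indicator measurableSet_Ioo,
    inter_eq_self_of_subset_right (Ioo_subset_Ioo_right hw.2.le), integral_div,
    ← integral_Ioc_eq_integral_Ioo, ← intervalIntegral.integral_of_le hw.1.le,
    integral_sub_rpow_div_sub_rpow hr hw.1.le hw.2, sub_zero, sub_zero, div_one]
  exact div_self (Real.rpow_pos_of_pos hw.1 _).ne'

lemma measurable_uncurry_geometricMixingDensity (r : ℝ) :
    Measurable (Function.uncurry fun p w ↦ geometricMixingDensity r w p) := by
  have hset : MeasurableSet {x : ℝ × ℝ | 0 < x.1 ∧ x.1 < x.2} :=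
    (measurableSet_lt measurable_const measurable_fst).inter
      (measurableSet_lt measurable_fst measurable_snd)
  exact Measurable.ite hset (by fun_prop) measurable_const

lemma integral_geometricMixingDensity_mul {r p : ℝ} (hp : 0 < p) (g : ℝ → ℝ) :
    ∫ w in Ioo 0 1, geometricMixingDensity r w p * (g w / (1 - w)) =
      (r - 1) / (1 - p) ^ r * ∫ w in Ioo p 1, (w - p) ^ (r - 2) * g w / w ^ (r - 1) := by
  have support : Ioo p 1 = Ioo 0 1 ∩ Ioi p := by
    rw [inter_comm, Ioi_inter_Ioo, sup_eq_left.2 hp.le]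
  rw [← integral_const_mul, support, ← setIntegral_indicator measurableSet_Ioi]
  refine setIntegral_congr_fun measurableSet_Ioo fun w hw ↦ ?_
  have hw₁ : 1 - w ≠ 0 := (sub_pos.2 hw.2).ne'
  by_cases hpw : p < w
  · simp only [geometricMixingDensity, indicator_of_mem (show p ∈ Ioo 0 w from ⟨hp, hpw⟩),
      indicator_of_mem (mem_Ioi.2 hpw)]
    field_simp
  · simp [geometricMixingDensity, hpw]

theorem integral_Ioo_mul_integral_sub_rpow_mul {r : ℝ} (hr : 1 < r) {g : ℝ → ℝ}
    (hg : IntegrableOn (fun w ↦ g w / (1 - w)) (Ioo 0 1)) :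
    ∫ p in Ioo 0 1,
        (r - 1) / (1 - p) ^ r * ∫ w in Ioo p 1, (w - p) ^ (r - 2) * g w / w ^ (r - 1) =
      ∫ w in Ioo 0 1, g w / (1 - w) := by
  rw [setIntegral_congr_fun measurableSet_Ioo fun p hp ↦
    (integral_geometricMixingDensity_mul (r := r) hp.1 g).symm]
  refine integral_integral_smul_of_integral_eq_one
    (measurable_uncurry_geometricMixingDensity r).aestronglyMeasurable ?_ ?_ hg
  · filter_upwards [ae_restrict_mem measurableSet_Ioo] with w hw
    exact .of_forall (geometricMixingDensity_nonneg hr.le hw.2.le)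
  · filter_upwards [ae_restrict_mem measurableSet_Ioo] with w hw
    exact integral_geometricMixingDensity hr hw

end GeometricMixing

section LogIntegral

lemma integral_comp_exp_neg_Ioi {E : Type*} [NormedAddCommGroup E] [NormedSpace ℝ E]
    (g : ℝ → E) (a : ℝ) :
    ∫ t in Ioi a, Real.exp (-t) • g (Real.exp (-t)) = ∫ x in Ioo 0 (Real.exp (-a)), g x := by
  rw [integral_comp_neg_Ioi a fun t ↦ Real.exp t • g (Real.exp t), integral_Iic_eq_integral_Iio,
    ← Real.image_exp_Iio, integral_image_eq_integral_deriv_smul_of_monotoneOn measurableSet_Iio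
      (fun t _ ↦ (Real.hasDerivAt_exp t).hasDerivWithinAt) (Real.exp_monotone.monotoneOn _)]

lemma integral_neg_log_rpow_mul_rpow {s a : ℝ} (hs : 0 < s) (ha : 0 < a) :
    ∫ x in Ioo 0 1, (-Real.log x) ^ (s - 1) * x ^ (a - 1) = a ^ (-s) * Real.Gamma s := by
  have subst := integral_comp_exp_neg_Ioi (fun x ↦ (-Real.log x) ^ (s - 1) * x ^ (a - 1)) 0
  rw [neg_zero, Real.exp_zero] at subst
  rw [Real.rpow_neg ha.le, ← Real.inv_rpow ha.le, ← one_div,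
    ← Real.integral_rpow_mul_exp_neg_mul_Ioi hs ha, ← subst]
  refine setIntegral_congr_fun measurableSet_Ioi fun t _ ↦ ?_
  simp only [smul_eq_mul, Real.log_exp, neg_neg]
  rw [← Real.exp_mul, mul_left_comm, ← Real.exp_add]
  ring_nf

lemma summable_nat_add_rpow_neg {s a : ℝ} (hs : 1 < s) (ha : 0 ≤ a) :
    Summable fun n : ℕ ↦ ((n : ℝ) + a) ^ (-s) := by
  refine ((Real.summable_one_div_nat_add_rpow a s).2 hs).congr fun n ↦ ?_
  have hn : 0 ≤ (n : ℝ) + a := by positivity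
  rw [abs_of_nonneg hn, Real.rpow_neg hn, one_div]

lemma hasSum_rpow_nat_add_sub_one {x : ℝ} (hx : x ∈ Ioo 0 1) (a : ℝ) :
    HasSum (fun n : ℕ ↦ x ^ ((n : ℝ) + a - 1)) (x ^ (a - 1) / (1 - x)) := by
  refine ((hasSum_geometric_of_lt_one hx.1.le hx.2).mul_left (x ^ (a - 1))).congr_fun fun n ↦ ?_
  rw [← Real.rpow_natCast, ← Real.rpow_add hx.1]
  ring_nf

theorem integral_neg_log_rpow_mul_rpow_div_one_sub {s a : ℝ} (hs : 1 < s) (ha : 0 < a) :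
    ∫ x in Ioo 0 1, (-Real.log x) ^ (s - 1) * (x ^ (a - 1) / (1 - x)) =
      (∑' n : ℕ, ((n : ℝ) + a) ^ (-s)) * Real.Gamma s := by
  have hs₀ : 0 < s := zero_lt_one.trans hs
  have hna (n : ℕ) : 0 < (n : ℝ) + a := by positivity
  have term_integral (n : ℕ) := integral_neg_log_rpow_mul_rpow hs₀ (hna n)
  have term_integrable (n : ℕ) :
      IntegrableOn (fun x ↦ (-Real.log x) ^ (s - 1) * x ^ ((n : ℝ) + a - 1)) (Ioo 0 1) := by
    have := hna n
    have := Real.Gamma_pos_of_pos hs₀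
    exact .of_integral_ne_zero (by rw [term_integral]; positivity)
  have norm_summable : Summable fun n : ℕ ↦
      ∫ x in Ioo 0 1, ‖(-Real.log x) ^ (s - 1) * x ^ ((n : ℝ) + a - 1)‖ := by
    refine ((summable_nat_add_rpow_neg hs ha.le).mul_right (Real.Gamma s)).congr fun n ↦ ?_
    rw [← term_integral]
    refine setIntegral_congr_fun measurableSet_Ioo fun x hx ↦ (Real.norm_of_nonneg ?_).symm
    have hlog : 0 < -Real.log x := neg_pos.2 (Real.log_neg hx.1 hx.2)
    have hx₀ := hx.1
    positivity
  calc ∫ x in Ioo 0 1, (-Real.log x) ^ (s - 1) * (x ^ (a - 1) / (1 - x))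
      = ∫ x in Ioo 0 1, ∑' n : ℕ, (-Real.log x) ^ (s - 1) * x ^ ((n : ℝ) + a - 1) :=
        setIntegral_congr_fun measurableSet_Ioo fun x hx ↦
          ((hasSum_rpow_nat_add_sub_one hx a).mul_left _).tsum_eq.symm
    _ = ∑' n : ℕ, ∫ x in Ioo 0 1, (-Real.log x) ^ (s - 1) * x ^ ((n : ℝ) + a - 1) :=
        (integral_tsum_of_summable_integral_norm term_integrable norm_summable).symm
    _ = (∑' n : ℕ, ((n : ℝ) + a) ^ (-s)) * Real.Gamma s := by
        simp only [term_integral, tsum_mul_right]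

lemma integral_neg_log_rpow_div_one_sub {s : ℝ} (hs : 1 < s) :
    ∫ x in Ioo 0 1, (-Real.log x) ^ (s - 1) / (1 - x) = zetaS s * Real.Gamma s := by
  simpa [zetaS, div_eq_mul_inv] using integral_neg_log_rpow_mul_rpow_div_one_sub hs one_pos

lemma zetaS_pos {s : ℝ} (hs : 1 < s) : 0 < zetaS s :=
  (summable_nat_add_rpow_neg hs zero_le_one).tsum_pos (fun n ↦ by positivity) 0 (by simp)

end LogIntegral

lemma integral_sub_rpow_mul_neg_log_rpow_nonneg (r s : ℝ) {p : ℝ} (hp : 0 ≤ p) :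
    0 ≤ ∫ w in Ioo p 1, (w - p) ^ (r - 2) * (-Real.log w) ^ (s - 1) / w ^ (r - 1) := by
  refine setIntegral_nonneg measurableSet_Ioo fun w hw ↦ ?_
  have hw₀ : 0 < w := hp.trans_lt hw.1
  have hwp : 0 < w - p := sub_pos.2 hw.1
  have hlog : 0 < -Real.log w := neg_pos.2 (Real.log_neg hw₀ hw.2)
  positivity

/-- For `s > 1` and `r > 1`, the mixing density
`f(p) = (r-1)/(ζ(s)Γ(s)(1-p)^r) ∫_p^1 (ω-p)^(r-2)(-ln ω)^(s-1)/ω^(r-1) dω`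
is a genuine probability density on `(0,1)`. -/
theorem negBinomial_mixing_density_is_pdf (s : ℝ) (hs : 1 < s) (r : ℝ) (hr : 1 < r) :
    (∀ p ∈ Set.Ioo (0 : ℝ) 1,
        0 ≤ (r - 1) / (zetaS s * Real.Gamma s * (1 - p) ^ r) *
          ∫ ω in Set.Ioo p 1,
            (ω - p) ^ (r - 2) * (-Real.log ω) ^ (s - 1) / ω ^ (r - 1)) ∧
    ∫ p in Set.Ioo (0 : ℝ) 1,
        (r - 1) / (zetaS s * Real.Gamma s * (1 - p) ^ r) *
          ∫ ω in Set.Ioo p 1,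
            (ω - p) ^ (r - 2) * (-Real.log ω) ^ (s - 1) / ω ^ (r - 1)
      = 1 := by
  have hZ : 0 < zetaS s * Real.Gamma s :=
    mul_pos (zetaS_pos hs) (Real.Gamma_pos_of_pos (zero_lt_one.trans hs))
  refine ⟨fun p hp ↦ ?_, ?_⟩
  · have := sub_pos.2 hp.2
    have := sub_pos.2 hr
    exact mul_nonneg (by positivity) (integral_sub_rpow_mul_neg_log_rpow_nonneg r s hp.1.le)
  · have factor (p x : ℝ) : (r - 1) / (zetaS s * Real.Gamma s * (1 - p) ^ r) * x =
        (r - 1) / (1 - p) ^ r * x / (zetaS s * Real.Gamma s) := by ring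
    have weight_integral := integral_neg_log_rpow_div_one_sub hs
    have weight_integrable :
        IntegrableOn (fun w ↦ (-Real.log w) ^ (s - 1) / (1 - w)) (Ioo 0 1) :=
      .of_integral_ne_zero (weight_integral ▸ hZ.ne')
    simp only [factor]
    rw [integral_div, integral_Ioo_mul_integral_sub_rpow_mul hr weight_integrable, weight_integral,
      div_self hZ.ne']
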